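/- arXiv:1207.6717 — 2 statements merged into one kernel-verified Lean document; each statement's English description precedes it below -/
import Mathlib

section
/- Let W be a real random variable taking exactly two values a and b, with P(W = a) = q = 1 − P(W = b), satisfying E W = 0 and |a − b| ≤ 1. Then for any ζ ∈ [0,1], E[e^{ζW}] ≤ e^{ζ²·q}. -/
/-!
For `x ≤ 1` one has `exp x ≤ 1 + x + x ^ 2`. Applied to `x = t * (X - 𝔼 X)` and integrated, the
linear term vanishes and the quadratic one is `t ^ 2 * Var X`, so `1 + v ≤ exp v` bounds the
moment generating function by the variance. For masses `q` and `1 - q` at `a` and `b` the variance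
is `q * (1 - q) * (a - b) ^ 2`, which is at most `q` when `|a - b| ≤ 1`.
-/

open MeasureTheory ProbabilityTheory unitInterval

lemma exp_le_one_add_self_add_sq {x : ℝ} (hx : x ≤ 1) : Real.exp x ≤ 1 + x + x ^ 2 := by
  obtain hx' | hx' := le_total x (-1)
  · calc
      Real.exp x ≤ 1 := Real.exp_le_one_iff.2 (by linarith)
      _ ≤ 1 + x + x ^ 2 := by nlinarith
  · linarith [le_of_abs_le (Real.abs_exp_sub_one_sub_id_le (abs_le.2 ⟨hx', hx⟩))]

section Variance

variable {Ω : Type*} [MeasurableSpace Ω] {μ : Measure Ω} [IsProbabilityMeasure μ]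
  {X : Ω → ℝ} {t : ℝ}

lemma integral_one_add_mul_sub_mean_add_sq (hX : MemLp X 2 μ) :
    ∫ ω, (1 + t * (X ω - μ[X]) + (t * (X ω - μ[X])) ^ 2) ∂μ = 1 + t ^ 2 * Var[X; μ] := by
  have hX₁ : Integrable X μ := hX.integrable one_le_two
  have hlin : Integrable (fun ω ↦ t * (X ω - μ[X])) μ :=
    (hX₁.sub (integrable_const _)).const_mul t
  have hone_add : Integrable (fun ω ↦ 1 + t * (X ω - μ[X])) μ := (integrable_const 1).add hlin
  have hsq : Integrable (fun ω ↦ (t * (X ω - μ[X])) ^ 2) μ :=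
    ((hX.sub (memLp_const _)).const_mul t).integrable_sq
  have hlin_zero : ∫ ω, t * (X ω - μ[X]) ∂μ = 0 := by
    simp [integral_const_mul, integral_sub hX₁ (integrable_const _)]
  have hsq_var : ∫ ω, (t * (X ω - μ[X])) ^ 2 ∂μ = t ^ 2 * Var[X; μ] := by
    simp only [mul_pow, integral_const_mul, variance_eq_integral hX.aemeasurable]
  rw [integral_add hone_add hsq, integral_add (integrable_const 1) hlin, hlin_zero, hsq_var]
  simp

lemma mgf_sub_mean_le_exp_sq_mul_variance (hX : MemLp X 2 μ)
    (ht : ∀ᵐ ω ∂μ, t * (X ω - μ[X]) ≤ 1) :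
    mgf (fun ω ↦ X ω - μ[X]) μ t ≤ Real.exp (t ^ 2 * Var[X; μ]) := by
  have hc : MemLp (fun ω ↦ t * (X ω - μ[X])) 2 μ := (hX.sub (memLp_const _)).const_mul t
  have hint : Integrable (fun ω ↦ 1 + t * (X ω - μ[X]) + (t * (X ω - μ[X])) ^ 2) μ :=
    ((integrable_const _).add (hc.integrable one_le_two)).add hc.integrable_sq
  calc
    mgf (fun ω ↦ X ω - μ[X]) μ t
        ≤ ∫ ω, (1 + t * (X ω - μ[X]) + (t * (X ω - μ[X])) ^ 2) ∂μ :=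
      integral_mono_of_nonneg (.of_forall fun _ ↦ (Real.exp_pos _).le) hint
        (ht.mono fun _ ↦ exp_le_one_add_self_add_sq)
    _ = t ^ 2 * Var[X; μ] + 1 := by rw [integral_one_add_mul_sub_mean_add_sq hX, add_comm]
    _ ≤ Real.exp (t ^ 2 * Var[X; μ]) := Real.add_one_le_exp _

lemma mgf_le_exp_mean_add_sq_mul_variance (hX : MemLp X 2 μ)
    (ht : ∀ᵐ ω ∂μ, t * (X ω - μ[X]) ≤ 1) :
    mgf X μ t ≤ Real.exp (t * μ[X] + t ^ 2 * Var[X; μ]) := by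
  calc
    mgf X μ t = mgf (fun ω ↦ (X ω - μ[X]) + μ[X]) μ t := by simp only [sub_add_cancel]
    _ = mgf (fun ω ↦ X ω - μ[X]) μ t * Real.exp (t * μ[X]) := mgf_add_const _
    _ ≤ Real.exp (t ^ 2 * Var[X; μ]) * Real.exp (t * μ[X]) := by
      gcongr
      exact mgf_sub_mean_le_exp_sq_mul_variance hX ht
    _ = Real.exp (t * μ[X] + t ^ 2 * Var[X; μ]) := by rw [← Real.exp_add, add_comm]

end Variance

section Bernoulli

variable {α : Type*} [MeasurableSpace α] [MeasurableSingletonClass α]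

lemma ae_bernoulliMeasure {x y : α} (p : I) {P : α → Prop} (hx : P x) (hy : P y) :
    ∀ᵐ z ∂Ber(x, y, p), P z := by
  rw [bernoulliMeasure_def, ae_add_measure_iff]
  exact ⟨Measure.ae_smul_measure (by simpa [ae_dirac_eq]) _,
    Measure.ae_smul_measure (by simpa [ae_dirac_eq]) _⟩

lemma memLp_bernoulliMeasure {E : Type*} [NormedAddCommGroup E] (x y : α) (p : I) (f : α → E)
    (r : ENNReal) : MemLp f r Ber(x, y, p) :=
  .of_bound (integrable_bernoulliMeasure x y p f).aestronglyMeasurable (max ‖f x‖ ‖f y‖)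
    (ae_bernoulliMeasure p (le_max_left _ _) (le_max_right _ _))

lemma variance_bernoulliMeasure (x y : α) (p : I) (f : α → ℝ) :
    Var[f; Ber(x, y, p)] = p * (1 - p) * (f x - f y) ^ 2 := by
  rw [variance_eq_integral (integrable_bernoulliMeasure x y p f).aemeasurable]
  simp only [integral_bernoulliMeasure, smul_eq_mul]
  ring

lemma mgf_bernoulliMeasure (x y : α) (p : I) (f : α → ℝ) (t : ℝ) :
    mgf f Ber(x, y, p) t = p * Real.exp (t * f x) + (1 - p) * Real.exp (t * f y) :=
  integral_bernoulliMeasure x y p _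

lemma ae_mul_sub_mean_le_one_bernoulliMeasure {x y : α} (p : I) {f : α → ℝ} {t : ℝ}
    (ht : |t * (f x - f y)| ≤ 1) :
    ∀ᵐ z ∂Ber(x, y, p), t * (f z - ∫ w, f w ∂Ber(x, y, p)) ≤ 1 := by
  obtain ⟨hlower, hupper⟩ := abs_le.1 ht
  simp only [integral_bernoulliMeasure, smul_eq_mul]
  apply ae_bernoulliMeasure
  · calc
      t * (f x - (p * f x + (1 - p) * f y)) = (1 - p) * (t * (f x - f y)) := by ring
      _ ≤ 1 := by nlinarith [p.2.1, p.2.2]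
  · calc
      t * (f y - (p * f x + (1 - p) * f y)) = p * -(t * (f x - f y)) := by ring
      _ ≤ 1 := by nlinarith [p.2.1, p.2.2]

lemma mgf_bernoulliMeasure_le {x y : α} (p : I) {f : α → ℝ} {t : ℝ}
    (ht : |t * (f x - f y)| ≤ 1) :
    mgf f Ber(x, y, p) t ≤
      Real.exp (t * (p * f x + (1 - p) * f y) + t ^ 2 * (p * (1 - p) * (f x - f y) ^ 2)) := by
  simpa only [integral_bernoulliMeasure, smul_eq_mul, variance_bernoulliMeasure] using
    mgf_le_exp_mean_add_sq_mul_variance (memLp_bernoulliMeasure x y p f 2)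
      (ae_mul_sub_mean_le_one_bernoulliMeasure p ht)

end Bernoulli

theorem mgf_two_point_bound_general (q a b ζ : ℝ) (hq0 : 0 ≤ q) (hq1 : q ≤ 1)
    (hab : |a - b| ≤ 1) (hζ : |ζ| ≤ 1) :
    q * Real.exp (ζ * a) + (1 - q) * Real.exp (ζ * b) ≤
      Real.exp (ζ * (q * a + (1 - q) * b) + ζ ^ 2 * q) := by
  let p : I := ⟨q, hq0, hq1⟩
  have hζab : |ζ * (a - b)| ≤ 1 := by
    rw [abs_mul]
    exact mul_le_one₀ hζ (abs_nonneg _) hab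
  have hvar : q * (1 - q) * (a - b) ^ 2 ≤ q := by
    rw [mul_assoc]
    exact mul_le_of_le_one_right hq0 <|
      mul_le_one₀ (sub_le_self 1 hq0) (sq_nonneg _) ((sq_le_one_iff_abs_le_one _).2 hab)
  calc
    q * Real.exp (ζ * a) + (1 - q) * Real.exp (ζ * b) = mgf id Ber(a, b, p) ζ :=
      (mgf_bernoulliMeasure a b p id ζ).symm
    _ ≤ Real.exp (ζ * (q * a + (1 - q) * b) + ζ ^ 2 * (q * (1 - q) * (a - b) ^ 2)) :=
      mgf_bernoulliMeasure_le p hζab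
    _ ≤ Real.exp (ζ * (q * a + (1 - q) * b) + ζ ^ 2 * q) := by gcongr

/-- For a two-valued random variable `W` with `P(W = a) = q = 1 - P(W = b)`,
mean zero and `|a - b| ≤ 1`, and any `ζ ∈ [0,1]`, one has `E e^{ζ W} ≤ e^{ζ² q}`.
The expectation over the two-point distribution is written out explicitly. -/
theorem mgf_two_point_bound (q a b ζ : ℝ)
    (hq0 : 0 ≤ q) (hq1 : q ≤ 1)
    (hmean : q * a + (1 - q) * b = 0)
    (hab : |a - b| ≤ 1)
    (hζ0 : 0 ≤ ζ) (hζ1 : ζ ≤ 1) :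
    q * Real.exp (ζ * a) + (1 - q) * Real.exp (ζ * b) ≤ Real.exp (ζ ^ 2 * q) := by
  simpa only [hmean, mul_zero, zero_add] using
    mgf_two_point_bound_general q a b ζ hq0 hq1 hab (abs_le.2 ⟨by linarith, hζ1⟩)
end

section
/- Let n be a positive integer, δ, η > 0, and let F be a graph on the vertex set V = {1,…,n} with more than (1−δ)·n²/4 edges such that for every W ⊆ V, the number of edges of F not in the cut ∇(W, V∖W) is greater than η·n². Then the number τ(F) of triangles in F satisfies τ(F) > (1/12)·(η − 3δ)·n³ − n². -/
/-- The cut `∇_F(W, V ∖ W)`: edges of `F` with exactly one endpoint in `W`. -/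
def cutEdges {n : ℕ} (F : SimpleGraph (Fin n)) (W : Set (Fin n)) : Set (Sym2 (Fin n)) :=
  {e | ∃ x y : Fin n, e = s(x, y) ∧ F.Adj x y ∧ x ∈ W ∧ y ∉ W}

/-!
Cut `F` at the neighbourhood of each vertex `v` in turn. The vertices `v` whose cut misses an edge
`xy` are the common neighbours and the common non-neighbours of `x` and `y`, and there are
`n - d(x) - d(y) + 2 |N(x) ∩ N(y)|` of them. Summing over the edges, the number of missed edges over
all these cuts is exactly `n e(F) - ∑ d(v)² + 6 τ(F)`. Since `∑ (d(v) - n / 2)² ≥ 0`, this is at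
most `n³ / 4 - n e(F) + 6 τ(F)`, so many missed edges force many triangles.
-/

open Finset

/-- The edges of `G` that the cut `(W, Wᶜ)` misses, as a graph on the same vertices. -/
def uncutGraph {V : Type*} (G : SimpleGraph V) (W : Set V) : SimpleGraph V :=
  G \ G.between W Wᶜ

theorem uncutGraph_adj {V : Type*} {G : SimpleGraph V} {W : Set V} {x y : V} :
    (uncutGraph G W).Adj x y ↔ G.Adj x y ∧ (x ∈ W ↔ y ∈ W) := by
  simp only [uncutGraph, SimpleGraph.sdiff_adj, SimpleGraph.between_adj, Set.mem_compl_iff]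
  tauto

theorem edgeSet_uncutGraph_eq_sdiff_cutEdges {n : ℕ} (F : SimpleGraph (Fin n)) (W : Set (Fin n)) :
    (uncutGraph F W).edgeSet = F.edgeSet \ cutEdges F W := by
  suffices cutEdges F W = (F.between W Wᶜ).edgeSet by
    rw [uncutGraph, SimpleGraph.edgeSet_sdiff, this]
  ext ⟨x, y⟩
  simp only [cutEdges, Set.mem_ofPred_eq, SimpleGraph.mem_edgeSet, SimpleGraph.between_adj,
    Set.mem_compl_iff]
  grind [SimpleGraph.adj_comm]

section Counting

variable {V : Type*} [Fintype V] (G : SimpleGraph V) [DecidableRel G.Adj]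

theorem card_filter_dart (r : V → V → Prop) [DecidableRel r] :
    #{d : G.Dart | r d.fst d.snd} = #{p : V × V | G.Adj p.1 p.2 ∧ r p.1 p.2} :=
  card_bij' (fun d _ => d.toProd) (fun p hp => ⟨p, (mem_filter.1 hp).2.1⟩)
    (by simp) (by simp) (by simp) (by simp)

theorem two_mul_ncard_edgeSet_uncutGraph (W : Set V) [DecidablePred (· ∈ W)] :
    2 * (uncutGraph G W).edgeSet.ncard = #{d : G.Dart | d.fst ∈ W ↔ d.snd ∈ W} := by
  classical
  rw [← SimpleGraph.coe_edgeFinset, Set.ncard_coe_finset, SimpleGraph.two_mul_card_edgeFinset,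
    card_filter_dart G fun x y => x ∈ W ↔ y ∈ W]
  simp only [uncutGraph_adj]

theorem sum_dart_degree_fst : ∑ d : G.Dart, G.degree d.fst = ∑ v, G.degree v ^ 2 := by
  classical
  rw [← sum_fiberwise univ (fun d : G.Dart => d.fst)]
  refine sum_congr rfl fun v _ => ?_
  rw [sum_congr rfl fun d hd => by rw [(mem_filter.1 hd).2], sum_const,
    G.dart_fst_fiber_card_eq_degree, smul_eq_mul, sq]

theorem sum_dart_degree_snd : ∑ d : G.Dart, G.degree d.snd = ∑ v, G.degree v ^ 2 := by
  rw [← sum_dart_degree_fst G]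
  exact Equiv.sum_comp SimpleGraph.Dart.symm_involutive.toPerm fun d : G.Dart => G.degree d.fst

theorem eight_mul_card_mul_card_edgeFinset_le :
    8 * (Fintype.card V * #G.edgeFinset) ≤ 4 * ∑ v, G.degree v ^ 2 + Fintype.card V ^ 3 := by
  calc 8 * (Fintype.card V * #G.edgeFinset)
      = ∑ v, 2 * (2 * G.degree v) * Fintype.card V := by
        rw [← sum_mul, ← mul_sum, ← mul_sum, G.sum_degrees_eq_twice_card_edges]
        ring
    _ ≤ ∑ v, ((2 * G.degree v) ^ 2 + Fintype.card V ^ 2) :=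
        sum_le_sum fun v _ => two_mul_le_add_sq _ _
    _ = 4 * ∑ v, G.degree v ^ 2 + Fintype.card V ^ 3 := by
        simp only [mul_pow, sum_add_distrib, ← mul_sum, sum_const, card_univ, smul_eq_mul]
        ring

variable [DecidableEq V]

variable {G} in
theorem card_triangles_containing_edge {x y : V} (hxy : G.Adj x y) :
    #{t ∈ G.cliqueFinset 3 | x ∈ t ∧ y ∈ t} = #(G.neighborFinset x ∩ G.neighborFinset y) := by
  symm
  refine card_bij (fun z _ => {x, y, z}) ?_ ?_ ?_
  · intro z hz
    simp_all [SimpleGraph.is3Clique_triple_iff]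
  · intro z hz w _ h
    simp only [mem_inter, SimpleGraph.mem_neighborFinset] at hz
    have : z ∈ ({x, y, w} : Finset V) := by simp [← h]
    grind [hz.1.ne, hz.2.ne]
  · intro t ht
    simp only [mem_filter, SimpleGraph.mem_cliqueFinset_iff] at ht
    obtain ⟨ht, hx, hy⟩ := ht
    have hy' : y ∈ t.erase x := mem_erase.2 ⟨hxy.ne', hy⟩
    obtain ⟨z, hz⟩ : ∃ z, (t.erase x).erase y = {z} := by
      rw [← card_eq_one, card_erase_of_mem hy', card_erase_of_mem hx, ht.card_eq]
    obtain rfl : {x, y, z} = t := by rw [← hz, insert_erase hy', insert_erase hx]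
    rw [SimpleGraph.is3Clique_triple_iff] at ht
    exact ⟨z, by simp [ht], rfl⟩

variable {G} in
theorem card_darts_within_clique {t : Finset V} (ht : G.IsClique t) :
    #{d : G.Dart | d.fst ∈ t ∧ d.snd ∈ t} = #t * #t - #t := by
  have : ({p : V × V | G.Adj p.1 p.2 ∧ p.1 ∈ t ∧ p.2 ∈ t} : Finset (V × V)) = t.offDiag := by
    ext ⟨x, y⟩
    simp only [mem_filter, mem_univ, true_and, mem_offDiag]
    exact ⟨fun ⟨hxy, hx, hy⟩ => ⟨hx, hy, hxy.ne⟩, fun ⟨hx, hy, hne⟩ => ⟨ht hx hy hne, hx, hy⟩⟩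
  rw [card_filter_dart G fun x y => x ∈ t ∧ y ∈ t, this, offDiag_card]

theorem sum_dart_card_common_neighbors :
    ∑ d : G.Dart, #(G.neighborFinset d.fst ∩ G.neighborFinset d.snd)
      = 6 * #(G.cliqueFinset 3) := by
  calc ∑ d : G.Dart, #(G.neighborFinset d.fst ∩ G.neighborFinset d.snd)
      = ∑ d : G.Dart, #{t ∈ G.cliqueFinset 3 | d.fst ∈ t ∧ d.snd ∈ t} :=
        sum_congr rfl fun d _ => (card_triangles_containing_edge d.adj).symm
    _ = ∑ t ∈ G.cliqueFinset 3, #{d : G.Dart | d.fst ∈ t ∧ d.snd ∈ t} :=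
        sum_card_bipartiteAbove_eq_sum_card_bipartiteBelow _
    _ = ∑ t ∈ G.cliqueFinset 3, 6 :=
        sum_congr rfl fun t ht => by
          rw [G.mem_cliqueFinset_iff] at ht
          rw [card_darts_within_clique ht.isClique, ht.card_eq]
    _ = 6 * #(G.cliqueFinset 3) := by rw [sum_const, smul_eq_mul, mul_comm]

theorem card_adj_iff_adj_add_degree_add_degree (x y : V) :
    #{v | G.Adj v x ↔ G.Adj v y} + G.degree x + G.degree y
      = Fintype.card V + 2 * #(G.neighborFinset x ∩ G.neighborFinset y) := by
  have : ({v | G.Adj v x ↔ G.Adj v y} : Finset V)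
      = (G.neighborFinset x ∩ G.neighborFinset y) ∪ (G.neighborFinset x ∪ G.neighborFinset y)ᶜ := by
    ext v
    simp only [mem_filter, mem_univ, true_and, mem_union, mem_inter, mem_compl,
      SimpleGraph.mem_neighborFinset, G.adj_comm v]
    tauto
  rw [this, card_union_of_disjoint (disjoint_compl_right.mono_left inter_subset_union),
    ← G.card_neighborFinset_eq_degree x, ← G.card_neighborFinset_eq_degree y]
  have := card_union_add_card_inter (G.neighborFinset x) (G.neighborFinset y)
  have := card_add_card_compl (G.neighborFinset x ∪ G.neighborFinset y)
  omega

theorem sum_ncard_edgeSet_uncutGraph_neighborSet_add_sum_degree_sq :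
    ∑ v, (uncutGraph G (G.neighborSet v)).edgeSet.ncard + ∑ v, G.degree v ^ 2
      = Fintype.card V * #G.edgeFinset + 6 * #(G.cliqueFinset 3) := by
  have double_count : 2 * ∑ v, (uncutGraph G (G.neighborSet v)).edgeSet.ncard
      = ∑ d : G.Dart, #{v | G.Adj v d.fst ↔ G.Adj v d.snd} := by
    simp only [mul_sum, two_mul_ncard_edgeSet_uncutGraph G, SimpleGraph.mem_neighborSet]
    exact sum_card_bipartiteAbove_eq_sum_card_bipartiteBelow _
  have sum_over_darts : ∑ d : G.Dart,
        (#{v | G.Adj v d.fst ↔ G.Adj v d.snd} + G.degree d.fst + G.degree d.snd)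
      = ∑ d : G.Dart,
        (Fintype.card V + 2 * #(G.neighborFinset d.fst ∩ G.neighborFinset d.snd)) :=
    sum_congr rfl fun d _ => card_adj_iff_adj_add_degree_add_degree G d.fst d.snd
  simp only [sum_add_distrib, ← mul_sum, sum_dart_card_common_neighbors, sum_dart_degree_fst,
    sum_dart_degree_snd, ← double_count, sum_const, card_univ, G.dart_card_eq_twice_card_edges,
    smul_eq_mul] at sum_over_darts
  linarith

end Counting

theorem many_triangles_of_dense_far_from_bipartite_general {V : Type*} [Fintype V] [Nonempty V]
    {δ η : ℝ} {G : SimpleGraph V}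
    (hsize : (1 - δ) * Fintype.card V ^ 2 / 4 ≤ G.edgeSet.ncard)
    (huncut : ∀ v, η * Fintype.card V ^ 2 < (uncutGraph G (G.neighborSet v)).edgeSet.ncard) :
    (4 * η - δ) / 24 * Fintype.card V ^ 3 < (G.cliqueSet 3).ncard := by
  classical
  rw [← G.coe_cliqueFinset, Set.ncard_coe_finset]
  rw [← G.coe_edgeFinset, Set.ncard_coe_finset] at hsize
  have upper : 4 * (∑ v, (uncutGraph G (G.neighborSet v)).edgeSet.ncard : ℝ)
      + 4 * (Fintype.card V * #G.edgeFinset)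
      ≤ 24 * #(G.cliqueFinset 3) + Fintype.card V ^ 3 := by
    have := sum_ncard_edgeSet_uncutGraph_neighborSet_add_sum_degree_sq G
    have := eight_mul_card_mul_card_edgeFinset_le G
    norm_cast
    omega
  have lower : Fintype.card V * (η * Fintype.card V ^ 2)
      < (∑ v, (uncutGraph G (G.neighborSet v)).edgeSet.ncard : ℝ) := by
    simpa using sum_lt_sum_of_nonempty univ_nonempty fun v _ => huncut v
  have dense := mul_le_mul_of_nonneg_left hsize (Nat.cast_nonneg (α := ℝ) (Fintype.card V))
  linarith

theorem many_triangles_of_dense_far_from_bipartite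
    (n : ℕ) (hn : 0 < n) (δ η : ℝ) (hδ : δ > 0) (hη : η > 0)
    (F : SimpleGraph (Fin n))
    (hsize : (F.edgeSet.ncard : ℝ) > (1 - δ) * n ^ 2 / 4)
    (hcut : ∀ W : Set (Fin n),
      ((F.edgeSet \ cutEdges F W).ncard : ℝ) > η * n ^ 2) :
    (((F.cliqueSet 3).ncard : ℝ)) > (1 / 12) * (η - 3 * δ) * n ^ 3 - n ^ 2 := by
  have : Nonempty (Fin n) := ⟨⟨0, hn⟩⟩
  have strong := many_triangles_of_dense_far_from_bipartite_general (δ := δ) (η := η) (G := F)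
    (by simpa using hsize.le) fun v => by
      simpa [edgeSet_uncutGraph_eq_sdiff_cutEdges] using hcut (F.neighborSet v)
  rw [Fintype.card_fin] at strong
  have : 0 ≤ (2 * η + 5 * δ) / 24 * n ^ 3 + (n : ℝ) ^ 2 := by positivity
  linarith
end
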